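/- Let k be an algebraically closed field of characteristic p, W(k) the Witt vectors, and Y a scheme over Spec(ℤ_p) of finite type which is a torsor (in the flat topology) of a smooth affine group scheme G_{ℤ_p} over ℤ_p with connected special fibre G_{𝔽_p}. If Y(W(k)) is non-empty, then Y(ℤ_p) is non-empty. -/

import Mathlib

/-!
`Y = Spec B` becomes isomorphic to `G = Spec A` over the faithfully flat cover `Y → Spec ℤ_p`, so
it is smooth over `ℤ_p` by descent (`smooth_of_torsor`), and an `𝔽_p`-point of `Y` lifts to a
`ℤ_p`-point because `ℤ_p` is `p`-adically complete (`exists_algHom_of_smooth`). It remains to find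
an `𝔽_p`-point, which is Lang's theorem (`exists_ringHom_zmod`).

Write `F` for the Frobenius `x ↦ x ^ p` on points of `G` and `Y` with values in a ring where `p = 0`.
For a point `a` of `G` over a field `K` of characteristic `p`, the twisted conjugation
`x ↦ F(x)⁻¹ a x` of `G_K` is formally étale (`formallyEtale_twisted`): the Frobenius of a ring kills
square-zero ideals, so `F(x)` depends only on the reduction of `x`, and `x` is recovered
from `a x = F(x) c`. Hence this map is open, and its image contains a neighbourhood of the point
under `a` (`exists_open_twisted`). Call a point of `G_{𝔽_p}` good (`Diff`) if it lies under some `a`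
with `F(y) = a y` for a field-valued point `y` of `Y`. If `F(x) c = a x` then
`F(y) = c y` is equivalent to `F(x y) = a (x y)`, so goodness is locally constant
(`exists_open_diff_iff`). Good points exist, as `Y` has a field-valued point in characteristic `p`
and is a torsor; as `G_{𝔽_p}` is connected, all its points are good, in particular the neutral
one. This gives a field-valued point with `F(y) = y`, that is, an `𝔽_p`-point.
-/


open scoped TensorProduct

/-- The canonical ring homomorphism `ℤ_p → W(k)` for `k` of characteristic `p`, obtained from
the identification `W(𝔽_p) ≅ ℤ_p`. -/
noncomputable def padicToWitt (p : ℕ) [Fact p.Prime] (k : Type*) [CommRing k] [CharP k p] :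
    ℤ_[p] →+* WittVector p k :=
  (WittVector.map (ZMod.castHom (dvd_refl p) k)).comp (WittVector.equiv p).symm.toRingHom

namespace TorsorLang

open WithConv Algebra.TensorProduct

/-! ### Points of an affine group scheme -/

section Points

variable {R : Type*} [CommRing R] {A : Type*} [CommRing A] [HopfAlgebra R A]
  {T T' : Type*} [CommRing T] [Algebra R T] [CommRing T'] [Algebra R T']

variable (A) in
/-- Functoriality in `T` of the monoid `G(T)` of `T`-points of `G = Spec A`. -/
noncomputable def gmap (f : T →ₐ[R] T') : WithConv (A →ₐ[R] T) →* WithConv (A →ₐ[R] T') where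
  toFun g := toConv (f.comp g.ofConv)
  map_one' := by
    apply WithConv.ofConv_injective
    ext c
    simp [AlgHom.convOne_def]
  map_mul' g h := by
    apply WithConv.ofConv_injective
    exact AlgHom.comp_convMul_distrib f g h

/-- The group structure on the `T`-points of `Spec A`, the inverse being precomposition with the
antipode. -/
noncomputable abbrev pointsGroup : Group (WithConv (A →ₐ[R] T)) :=
  { (inferInstance : Monoid (WithConv (A →ₐ[R] T))) with
    inv := fun f ↦ toConv (f.ofConv.comp (HopfAlgebra.antipodeAlgHom R A))
    inv_mul_cancel := fun f ↦ by
      have := congrArg (gmap A f.ofConv) (AlgHom.antipode_id_cancel (R := R) (A := A))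
      rw [map_mul, map_one] at this
      exact this }

end Points

/-! ### The action on points of a scheme with coaction -/

section Action

variable {R : Type*} [CommRing R] {A : Type*} [CommRing A] [HopfAlgebra R A]
  {T T' : Type*} [CommRing T] [Algebra R T] [CommRing T'] [Algebra R T']
  {B : Type*} [CommRing B] [Algebra R B] (ρ : B →ₐ[R] (A ⊗[R] B))

/-- The action of `G(T)` on `Y(T)`, for `G = Spec A` and `Y = Spec B`, given by the coaction `ρ`. -/
noncomputable def act (g : WithConv (A →ₐ[R] T)) (y : B →ₐ[R] T) : B →ₐ[R] T :=
  (lift g.ofConv y (fun _ _ ↦ Commute.all _ _)).comp ρ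

lemma comp_act (f : T →ₐ[R] T') (g : WithConv (A →ₐ[R] T)) (y : B →ₐ[R] T) :
    f.comp (act ρ g y) = act ρ (gmap A f g) (f.comp y) := by
  unfold act
  rw [← AlgHom.comp_assoc]
  congr 1
  ext <;> simp [gmap]

variable {ρ}

lemma act_mul
    (hcoassoc :
      (TensorProduct.assoc R A A B).toLinearMap ∘ₗ
          (TensorProduct.map (Coalgebra.comul (R := R) (A := A)) LinearMap.id) ∘ₗ
          ρ.toLinearMap =
        (TensorProduct.map LinearMap.id ρ.toLinearMap) ∘ₗ ρ.toLinearMap)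
    (g h : WithConv (A →ₐ[R] T)) (y : B →ₐ[R] T) :
    act ρ (g * h) y = act ρ g (act ρ h y) := by
  have h1 : act ρ g (act ρ h y) =
      (((lift g.ofConv (lift h.ofConv y fun _ _ ↦ Commute.all _ _)
        fun _ _ ↦ Commute.all _ _)).comp (Algebra.TensorProduct.map (.id R A) ρ)).comp ρ := by
    unfold act
    congr 1
    ext <;> simp
  have h2 : act ρ (g * h) y =
      (((lift g.ofConv (lift h.ofConv y fun _ _ ↦ Commute.all _ _)
        fun _ _ ↦ Commute.all _ _)).comp (((Algebra.TensorProduct.assoc R R R A A B).toAlgHom.comp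
        (Algebra.TensorProduct.map (Bialgebra.comulAlgHom R A) (.id R B))))).comp ρ := by
    unfold act
    congr 1
    ext a
    · have : ∀ z : A ⊗[R] A, lift g.ofConv h.ofConv (fun _ _ ↦ Commute.all _ _) z =
        lift g.ofConv (lift h.ofConv y fun _ _ ↦ Commute.all _ _) (fun _ _ ↦ Commute.all _ _)
          (Algebra.TensorProduct.assoc R R R A A B (z ⊗ₜ 1)) := by
        intro z
        induction z with
        | zero => simp
        | add x y hx hy => simp only [map_add, hx, hy, TensorProduct.add_tmul]
        | tmul x y => simp
      simpa [AlgHom.convMul_apply] using! this _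
    · simp [Algebra.TensorProduct.one_def]
  have h3 : ((Algebra.TensorProduct.assoc R R R A A B).toAlgHom.comp
      (Algebra.TensorProduct.map (Bialgebra.comulAlgHom R A) (.id R B))).comp ρ =
      (Algebra.TensorProduct.map (.id R A) ρ).comp ρ :=
    AlgHom.toLinearMap_injective hcoassoc
  rw [h1, h2, AlgHom.comp_assoc, h3, ← AlgHom.comp_assoc]

lemma act_one (hcounit :
      (TensorProduct.lid R B).toLinearMap ∘ₗ
          (TensorProduct.map (Coalgebra.counit (R := R) (A := A)) LinearMap.id) ∘ₗ
          ρ.toLinearMap =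
        LinearMap.id) (y : B →ₐ[R] T) : act ρ 1 y = y := by
  have h2 : act ρ 1 y = (y.comp ((Algebra.TensorProduct.lid R B).toAlgHom.comp
      (Algebra.TensorProduct.map (Bialgebra.counitAlgHom R A) (.id R B)))).comp ρ := by
    unfold act
    congr 1
    ext <;> simp [AlgHom.convOne_def, Algebra.ofId_apply, Algebra.algebraMap_eq_smul_one]
  rw [h2, AlgHom.comp_assoc]
  have : ((Algebra.TensorProduct.lid R B).toAlgHom.comp
      (Algebra.TensorProduct.map (Bialgebra.counitAlgHom R A) (.id R B))).comp ρ = AlgHom.id R B :=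
    AlgHom.toLinearMap_injective hcounit
  rw [this, AlgHom.comp_id]

/-- The action of `G(T)` on `Y(T)` is transitive, as `G × Y → Y × Y` is an isomorphism. -/
lemma exists_act_eq (htorsor : Function.Bijective
      (Algebra.TensorProduct.lift
        (Algebra.TensorProduct.includeRight : B →ₐ[R] A ⊗[R] B) ρ
        (fun _ _ => Commute.all _ _) : B ⊗[R] B →ₐ[R] A ⊗[R] B))
    (y y' : B →ₐ[R] T) : ∃ g : WithConv (A →ₐ[R] T), act ρ g y = y' := by
  let e := AlgEquiv.ofBijective _ htorsor
  let m : A ⊗[R] B →ₐ[R] T := (lift y y' fun _ _ ↦ Commute.all _ _).comp e.symm.toAlgHom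
  have hm : m.comp e.toAlgHom = lift y y' fun _ _ ↦ Commute.all _ _ := by
    ext <;> simp [m]
  have hm1 : m.comp includeRight = y := by
    ext b
    have := DFunLike.congr_fun hm (b ⊗ₜ 1)
    simpa [e] using this
  have hm2 : m.comp ρ = y' := by
    ext b
    have := DFunLike.congr_fun hm (1 ⊗ₜ b)
    simpa [e, ← Algebra.TensorProduct.one_def] using this
  refine ⟨toConv (m.comp includeLeft), ?_⟩
  rw [← hm2, act]
  congr 1
  rw [← hm1]
  ext <;> simp

end Action

/-! ### Frobenius in characteristic `p` -/

section CharP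

variable {p : ℕ} [hp : Fact p.Prime]

/-- A ring in which `p = 0` has at most one structure of `ℤ_p`-algebra, since every element of
`ℤ_p` is congruent to a natural number modulo `p`. -/
lemma padic_ringHom_ext {T : Type*} [CommRing T] (h : (p : T) = 0) (f g : ℤ_[p] →+* T) :
    f = g := by
  have key : ∀ (f : ℤ_[p] →+* T) (x : ℤ_[p]), f x = ((PadicInt.zmodRepr x : ℕ) : T) := by
    intro f x
    have hx : x - PadicInt.zmodRepr x ∈ Ideal.span {(p : ℤ_[p])} := by
      rw [← PadicInt.maximalIdeal_eq_span_p]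
      exact PadicInt.sub_zmodRepr_mem x
    obtain ⟨y, hy⟩ := Ideal.mem_span_singleton'.mp hx
    have := congrArg f hy
    rw [map_mul, map_natCast, h, mul_zero, map_sub, map_natCast] at this
    exact (sub_eq_zero.mp this.symm)
  ext x
  rw [key f, key g]

/-- Any ring homomorphism from a `ℤ_p`-algebra to one in which `p = 0` is `ℤ_p`-linear. -/
noncomputable def toA {X T : Type*} [CommRing X] [Algebra ℤ_[p] X] [CommRing T] [Algebra ℤ_[p] T]
    (h : (p : T) = 0) (f : X →+* T) : X →ₐ[ℤ_[p]] T :=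
  { f with
    commutes' := fun r ↦
      DFunLike.congr_fun
        (padic_ringHom_ext h (f.comp (algebraMap ℤ_[p] X)) (algebraMap ℤ_[p] T)) r }

@[simp] lemma toA_apply {X T : Type*} [CommRing X] [Algebra ℤ_[p] X] [CommRing T] [Algebra ℤ_[p] T]
    (h : (p : T) = 0) (f : X →+* T) (x : X) : toA h f x = f x := rfl

/-- The Frobenius `x ↦ x ^ p` of a (possibly zero) ring in which `p = 0`. -/
def frob {T : Type*} [CommRing T] (h : (p : T) = 0) : T →+* T where
  toFun x := x ^ p
  map_one' := one_pow _
  map_mul' x y := mul_pow x y p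
  map_zero' := zero_pow hp.out.ne_zero
  map_add' x y := by
    obtain ⟨r, hr⟩ := exists_add_pow_prime_eq hp.out x y
    simp [hr, h]

@[simp] lemma frob_apply {T : Type*} [CommRing T] (h : (p : T) = 0) (x : T) :
    frob h x = x ^ p := rfl

/-- The Frobenius of `X(T)`, for a `ℤ_p`-algebra `X`: composition with the Frobenius of `T`. -/
noncomputable def Fr {X T : Type*} [CommRing X] [Algebra ℤ_[p] X] [CommRing T] [Algebra ℤ_[p] T]
    (h : (p : T) = 0) (y : X →ₐ[ℤ_[p]] T) : X →ₐ[ℤ_[p]] T := (toA h (frob h)).comp y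

lemma comp_Fr {X T T' : Type*} [CommRing X] [Algebra ℤ_[p] X] [CommRing T] [Algebra ℤ_[p] T]
    [CommRing T'] [Algebra ℤ_[p] T'] (h : (p : T) = 0) (h' : (p : T') = 0) (f : T →ₐ[ℤ_[p]] T')
    (y : X →ₐ[ℤ_[p]] T) : f.comp (Fr h y) = Fr h' (f.comp y) := by
  ext x
  simp [Fr]

/-- The twisted conjugation map `x ↦ F(x)⁻¹ a x` of `G_K` is formally étale: `a` is a `K`-point
of `G = Spec A`, the rings `C` and `D` are both `K ⊗ A` (with universal points `xC` and `xD`), and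
`C → D` is the homomorphism of `K`-algebras under which `xC` goes to `F(xD)⁻¹ a xD`.  The reason is
that in a square-zero extension `T → T/I` of rings with `p = 0`, the Frobenius of `T` factors
through `T/I`, so that `F(x)`, and hence `x = a⁻¹ F(x) c`, is determined by `x` modulo `I`. -/
lemma formallyEtale_twisted {A : Type} [CommRing A] [HopfAlgebra ℤ_[p] A]
    {K C D : Type} [CommRing K] [CommRing C] [CommRing D] [Algebra ℤ_[p] K]
    [Algebra ℤ_[p] C] [Algebra ℤ_[p] D] [Algebra C D]
    (hC : (p : C) = 0) (hD : (p : D) = 0)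
    (κC : K →+* C) (κD : K →+* D) (xC : A →ₐ[ℤ_[p]] C) (xD : A →ₐ[ℤ_[p]] D)
    (hextC : ∀ (T : Type) [CommRing T] (f g : C →+* T), f.comp κC = g.comp κC →
      f.comp xC.toRingHom = g.comp xC.toRingHom → f = g)
    (hextD : ∀ (T : Type) [CommRing T] (f g : D →+* T), f.comp κD = g.comp κD →
      f.comp xD.toRingHom = g.comp xD.toRingHom → f = g)
    (hliftD : ∀ (T : Type) [CommRing T] (f : K →+* T) (g : A →+* T), (p : T) = 0 →
      ∃ h : D →+* T, h.comp κD = f ∧ h.comp xD.toRingHom = g)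
    (a : A →ₐ[ℤ_[p]] K)
    (hκ : (algebraMap C D).comp κC = κD)
    (hx : (toConv (Fr hD xD) : WithConv (A →ₐ[ℤ_[p]] D)) * toConv ((toA hD (algebraMap C D)).comp xC)
      = toConv ((toA hD κD).comp a) * toConv xD) :
    Algebra.FormallyEtale C D := by
  rw [Algebra.FormallyEtale.iff_comp_bijective]
  intro T _ _ I hI
  let _ : Algebra ℤ_[p] T := ((algebraMap C T).comp (algebraMap ℤ_[p] C)).toAlgebra
  let _ := pointsGroup (R := ℤ_[p]) (A := A) (T := T)
  have hT : (p : T) = 0 := by rw [← map_natCast (algebraMap C T), hC, map_zero]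
  let aT : WithConv (A →ₐ[ℤ_[p]] T) := toConv ((toA hT ((algebraMap C T).comp κC)).comp a)
  let cT : WithConv (A →ₐ[ℤ_[p]] T) := toConv ((toA hT (algebraMap C T)).comp xC)
  constructor
  · intro f g hfg
    have hfκ : ∀ f : D →ₐ[C] T, f.toRingHom.comp κD = (algebraMap C T).comp κC := by
      intro f
      rw [← hκ, ← RingHom.comp_assoc]
      congr 1
      exact f.comp_algebraMap
    have hfx : ∀ f : D →ₐ[C] T, (toConv (Fr hT ((toA hT f.toRingHom).comp xD)) :
        WithConv (A →ₐ[ℤ_[p]] T)) * cT = aT * toConv ((toA hT f.toRingHom).comp xD) := by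
      intro f
      have := congrArg (gmap A (toA hT f.toRingHom)) hx
      rw [map_mul, map_mul] at this
      convert! this using 2
      · simp only [gmap, MonoidHom.coe_mk, OneHom.coe_mk, comp_Fr hD hT]
      · simp only [gmap, MonoidHom.coe_mk, OneHom.coe_mk, cT]
        congr 1
        ext; simp
      · simp only [gmap, MonoidHom.coe_mk, OneHom.coe_mk, aT]
        congr 1
        ext y
        exact (DFunLike.congr_fun (hfκ f) (a y)).symm
    have hfrob : Fr hT ((toA hT f.toRingHom).comp xD) = Fr hT ((toA hT g.toRingHom).comp xD) := by
      ext y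
      have h1 : f (xD y) - g (xD y) ∈ I := by
        rw [← Ideal.Quotient.eq]
        exact DFunLike.congr_fun hfg (xD y)
      have h2 : frob hT (f (xD y) - g (xD y)) = 0 := by
        have : (f (xD y) - g (xD y)) ^ 2 = 0 := by
          rw [← Ideal.mem_bot, ← hI]
          exact Ideal.pow_mem_pow h1 2
        exact pow_eq_zero_of_le hp.out.two_le this
      rw [map_sub] at h2
      exact sub_eq_zero.mp h2
    have h3 := hfx f
    rw [hfrob, hfx g] at h3
    have h4 := mul_left_cancel h3
    have h5 : f.toRingHom = g.toRingHom := by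
      apply hextD
      · rw [hfκ, hfκ]
      · ext y
        exact (DFunLike.congr_fun (congrArg WithConv.ofConv h4) y).symm
    ext d
    exact DFunLike.congr_fun h5 d
  · intro h0
    have hTI : (p : T ⧸ I) = 0 := by
      rw [← map_natCast (Ideal.Quotient.mk I), hT, map_zero]
    -- the Frobenius of `T`, factored through `T ⧸ I`
    let σ : T ⧸ I →+* T := Ideal.Quotient.lift I (frob hT) fun i hi ↦ by
      have : i ^ 2 = 0 := by
        rw [← Ideal.mem_bot, ← hI]
        exact Ideal.pow_mem_pow hi 2
      exact pow_eq_zero_of_le hp.out.two_le this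
    have hσ' : ∀ t, σ (Ideal.Quotient.mk I t) = t ^ p := fun t ↦ rfl
    have hσ : ∀ t, Ideal.Quotient.mk I (σ t) = frob hTI t := by
      intro t
      obtain ⟨t, rfl⟩ := Ideal.Quotient.mk_surjective t
      rw [hσ', map_pow, frob_apply]
    let x0 : A →ₐ[ℤ_[p]] T ⧸ I := (toA hTI h0.toRingHom).comp xD
    let φ0 : WithConv (A →ₐ[ℤ_[p]] T) := toConv ((toA hT σ).comp x0)
    let mk : T →ₐ[ℤ_[p]] T ⧸ I := toA hTI (Ideal.Quotient.mk I)
    let x' := aT⁻¹ * (φ0 * cT)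
    have hx0 : gmap A mk φ0 * gmap A mk cT = gmap A mk aT * toConv x0 := by
      have := congrArg (gmap A (toA hTI h0.toRingHom)) hx
      rw [map_mul, map_mul] at this
      convert! this using 2
      · apply WithConv.ofConv_injective
        ext y
        exact (hσ _).trans (by simp [Fr, x0, gmap])
      · apply WithConv.ofConv_injective
        ext y
        simp [cT, mk, gmap]
      · apply WithConv.ofConv_injective
        ext y
        have : h0 (κD (a y)) = h0 (algebraMap C D (κC (a y))) := by rw [← hκ]; rfl
        simp [aT, mk, gmap]
        rw [this, AlgHom.commutes]
    have hx' : (gmap A mk x').ofConv = x0 := by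
      let _ := pointsGroup (R := ℤ_[p]) (A := A) (T := T ⧸ I)
      have h1 : gmap A mk x' = toConv x0 := by
        have h2 : gmap A mk (aT * x') = gmap A mk (φ0 * cT) := by
          congr 1
          exact mul_inv_cancel_left _ _
        rw [map_mul _ aT x', map_mul _ φ0 cT, hx0] at h2
        exact mul_left_cancel h2
      rw [h1]
    obtain ⟨h, hh1, hh2⟩ := hliftD T ((algebraMap C T).comp κC) x'.ofConv.toRingHom hT
    have hFx' : (toConv (Fr hT x'.ofConv) : WithConv (A →ₐ[ℤ_[p]] T)) = φ0 := by
      apply WithConv.ofConv_injective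
      ext y
      have := DFunLike.congr_fun hx' y
      simp only [φ0, AlgHom.comp_apply]
      rw [← this]
      exact (hσ' _).symm
    have hcomm : h.comp (algebraMap C D) = algebraMap C T := by
      apply hextC
      · rw [RingHom.comp_assoc, hκ, hh1]
      · have h1 := congrArg (gmap A (toA hT h)) hx
        rw [map_mul, map_mul] at h1
        have e1 : gmap A (toA hT h) (toConv (Fr hD xD)) = φ0 := by
          rw [← hFx']
          apply WithConv.ofConv_injective
          have : (toA hT h).comp xD = x'.ofConv := by
            ext y; exact DFunLike.congr_fun hh2 y
          simp only [gmap, MonoidHom.coe_mk, OneHom.coe_mk, comp_Fr hD hT, this]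
        have e2 : gmap A (toA hT h) (toConv ((toA hD κD).comp a)) = aT := by
          apply WithConv.ofConv_injective
          ext y
          exact DFunLike.congr_fun hh1 (a y)
        have e3 : gmap A (toA hT h) (toConv xD) = x' := by
          apply WithConv.ofConv_injective
          ext y
          exact DFunLike.congr_fun hh2 y
        rw [e1, e2, e3, mul_inv_cancel_left] at h1
        have h4 := mul_left_cancel h1
        ext y
        exact DFunLike.congr_fun (congrArg WithConv.ofConv h4) y
    refine ⟨{ h with commutes' := fun c ↦ DFunLike.congr_fun hcomm c }, ?_⟩
    have : (Ideal.Quotient.mk I).comp h = h0.toRingHom := by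
      apply hextD
      · rw [RingHom.comp_assoc, hh1, ← hκ, ← RingHom.comp_assoc, ← RingHom.comp_assoc]
        congr 1
        ext c
        exact (h0.commutes c).symm
      · rw [RingHom.comp_assoc, hh2]
        ext y
        exact DFunLike.congr_fun hx' y
    ext d
    exact DFunLike.congr_fun this d

end CharP

/-! ### Openness of the twisted conjugation map -/

section Tensor

variable {F K X T : Type*} [CommRing F] [CommRing K] [CommRing X] [CommRing T] [Algebra F K]
  [Algebra F X]

lemma tensor_ringHom_ext (f g : K ⊗[F] X →+* T)
    (h1 : f.comp (Algebra.TensorProduct.includeLeft : K →ₐ[F] K ⊗[F] X).toRingHom =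
      g.comp (Algebra.TensorProduct.includeLeft : K →ₐ[F] K ⊗[F] X).toRingHom)
    (h2 : f.comp (Algebra.TensorProduct.includeRight : X →ₐ[F] K ⊗[F] X).toRingHom =
      g.comp (Algebra.TensorProduct.includeRight : X →ₐ[F] K ⊗[F] X).toRingHom) : f = g := by
  apply RingHom.ext
  intro d
  induction d with
  | zero => simp
  | add x y hx hy => rw [map_add, map_add, hx, hy]
  | tmul s t =>
    have e : s ⊗ₜ[F] t = (s ⊗ₜ 1) * (1 ⊗ₜ t) := by simp
    rw [e, map_mul, map_mul]
    exact congrArg₂ (· * ·) (DFunLike.congr_fun h1 s) (DFunLike.congr_fun h2 t)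

lemma tensor_ringHom_lift (f : K →+* T) (g : X →+* T)
    (hfg : f.comp (algebraMap F K) = g.comp (algebraMap F X)) :
    ∃ h : K ⊗[F] X →+* T,
      h.comp (Algebra.TensorProduct.includeLeft : K →ₐ[F] K ⊗[F] X).toRingHom = f ∧
      h.comp (Algebra.TensorProduct.includeRight : X →ₐ[F] K ⊗[F] X).toRingHom = g := by
  let _ : Algebra F T := (f.comp (algebraMap F K)).toAlgebra
  let f' : K →ₐ[F] T := { f with commutes' := fun r ↦ rfl }
  let g' : X →ₐ[F] T := { g with commutes' := fun r ↦ (DFunLike.congr_fun hfg r).symm }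
  refine ⟨(Algebra.TensorProduct.lift f' g' fun _ _ ↦ Commute.all _ _).toRingHom, ?_, ?_⟩
  · ext y
    have : Algebra.TensorProduct.lift f' g' (fun _ _ ↦ Commute.all _ _) (y ⊗ₜ 1) = f' y := by simp
    exact this
  · ext y
    have : Algebra.TensorProduct.lift f' g' (fun _ _ ↦ Commute.all _ _) (1 ⊗ₜ y) = g' y := by simp
    exact this

end Tensor

section CharP

variable {p : ℕ} [hp : Fact p.Prime]

/-- The twisted conjugacy class `{F(x)⁻¹ a x}` of a field-valued point `a` of the special fibre of
`Spec A` contains an open neighbourhood `U` of the image of `a`: each `Q ∈ U` lies under some field-valued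
`c` with `F(x) c = a x`. -/
lemma exists_open_twisted {A : Type} [CommRing A] [HopfAlgebra ℤ_[p] A]
    (hA : Algebra.FiniteType ℤ_[p] A) [Algebra (ZMod p) (A ⧸ Ideal.span {(p : A)})]
    {K : Type} [Field K] [Algebra ℤ_[p] K] (hK : (p : K) = 0) (a : A →ₐ[ℤ_[p]] K) :
    ∃ U : Set (PrimeSpectrum (A ⧸ Ideal.span {(p : A)})), IsOpen U ∧
      (∀ P, P.asIdeal.comap (Ideal.Quotient.mk _) = RingHom.ker a → P ∈ U) ∧
      ∀ Q ∈ U, ∃ (L : Type) (_ : Field L) (_ : Algebra ℤ_[p] L) (hL : (p : L) = 0)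
        (i : K →+* L) (x : WithConv (A →ₐ[ℤ_[p]] L)) (c : A →ₐ[ℤ_[p]] L),
        toConv (Fr hL x.ofConv) * toConv c = toConv ((toA hL i).comp a) * x ∧
        Q.asIdeal.comap (Ideal.Quotient.mk _) = RingHom.ker c := by
  have : CharP K p := (CharP.charP_iff_prime_eq_zero hp.out).2 hK
  let _ : Algebra (ZMod p) K := ZMod.algebra K p
  let Ab := A ⧸ Ideal.span {(p : A)}
  -- `Spec D = G_K`, with universal point `x`; the twisted conjugation map is `φ : D → D`, taking `x`
  -- to `u = F(x)⁻¹ a x`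
  let D := K ⊗[ZMod p] Ab
  let κ : K →+* D := (Algebra.TensorProduct.includeLeft : K →ₐ[ZMod p] D).toRingHom
  let ν : Ab →+* D := (Algebra.TensorProduct.includeRight : Ab →ₐ[ZMod p] D).toRingHom
  let _ : Algebra ℤ_[p] D := (κ.comp (algebraMap ℤ_[p] K)).toAlgebra
  have hD : (p : D) = 0 := by rw [← map_natCast κ, hK, map_zero]
  let x : A →ₐ[ℤ_[p]] D := toA hD (ν.comp (Ideal.Quotient.mk _))
  have hext : ∀ (T : Type) [CommRing T] (f g : D →+* T), f.comp κ = g.comp κ →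
      f.comp x.toRingHom = g.comp x.toRingHom → f = g := by
    intro T _ f g h1 h2
    have h3 : f.comp ν = g.comp ν := by
      apply RingHom.cancel_right Ideal.Quotient.mk_surjective |>.mp
      exact h2
    exact tensor_ringHom_ext f g h1 h3
  have hlift : ∀ (T : Type) [CommRing T] (f : K →+* T) (g : A →+* T), (p : T) = 0 →
      ∃ h : D →+* T, h.comp κ = f ∧ h.comp x.toRingHom = g := by
    intro T _ f g hT
    let g0 : Ab →+* T := Ideal.Quotient.lift _ g (fun y hy ↦ by
      obtain ⟨z, rfl⟩ := Ideal.mem_span_singleton'.mp hy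
      simp [hT])
    obtain ⟨h, h1, h2⟩ := tensor_ringHom_lift (F := ZMod p) f g0 (Subsingleton.elim _ _)
    refine ⟨h, h1, ?_⟩
    ext y
    exact DFunLike.congr_fun h2 (Ideal.Quotient.mk _ y)
  let _ := pointsGroup (R := ℤ_[p]) (A := A) (T := D)
  let α : WithConv (A →ₐ[ℤ_[p]] D) := toConv ((toA hD κ).comp a)
  obtain ⟨u, hu⟩ : ∃ u : WithConv (A →ₐ[ℤ_[p]] D), toConv (Fr hD x) * u = α * toConv x :=
    ⟨(toConv (Fr hD x))⁻¹ * (α * toConv x), mul_inv_cancel_left _ _⟩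
  obtain ⟨φ, hφκ, hφx⟩ := hlift D κ u.ofConv.toRingHom hD
  have hopen : IsOpenMap (PrimeSpectrum.comap φ) := by
    have hft : (algebraMap (ZMod p) Ab).FiniteType := by
      apply RingHom.FiniteType.of_comp_finiteType (f := PadicInt.toZMod (p := p))
      have hAb : (p : Ab) = 0 := by
        rw [← map_natCast (Ideal.Quotient.mk _), Ideal.Quotient.eq_zero_iff_mem]
        exact Ideal.mem_span_singleton_self _
      rw [padic_ringHom_ext hAb ((algebraMap (ZMod p) Ab).comp _)
        ((Ideal.Quotient.mk _).comp (algebraMap ℤ_[p] A))]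
      exact (RingHom.FiniteType.of_surjective _ Ideal.Quotient.mk_surjective).comp
        (RingHom.finiteType_algebraMap.mpr hA)
    have hft' : Algebra.FiniteType (ZMod p) Ab := RingHom.finiteType_algebraMap.mp hft
    have hKD : Algebra.FiniteType K D := inferInstance
    have hnoeth : IsNoetherianRing D := Algebra.FiniteType.isNoetherianRing K D
    have hφft : φ.FiniteType := by
      apply RingHom.FiniteType.of_comp_finiteType (f := κ)
      rw [hφκ]
      exact RingHom.finiteType_algebraMap.mpr hKD
    have hφfp : φ.FinitePresentation := RingHom.FinitePresentation.of_finiteType.mp hφft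
    -- a synonym, so that `D` can be an algebra over `C` via `φ` without clashing with `Algebra.id D`
    let C := D
    let _ : Algebra C D := φ.toAlgebra
    have h1 : Algebra.FormallyEtale C D :=
      formallyEtale_twisted (C := C) (D := D) hD hD κ κ x x hext hext hlift a hφκ (by
        rw [← hu]
        congr 1
        apply WithConv.ofConv_injective
        ext y
        exact DFunLike.congr_fun hφx y)
    have h2 : Algebra.FinitePresentation C D := hφfp
    have h3 : Algebra.Smooth C D := ⟨inferInstance, h2⟩
    have h4 : Module.Flat C D := inferInstance
    exact PrimeSpectrum.isOpenMap_comap_of_hasGoingDown_of_finitePresentation (R := C) (S := D)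
  have hopen' : IsOpenMap (PrimeSpectrum.comap ν) := by
    have h := PrimeSpectrum.isOpenMap_comap_algebraMap_tensorProduct_of_field
      (K := ZMod p) (A := Ab) (B := K)
    let e : (Ab ⊗[ZMod p] K) ≃+* D := (Algebra.TensorProduct.comm (ZMod p) Ab K).toRingEquiv
    have he : ν = e.toRingHom.comp (algebraMap Ab (Ab ⊗[ZMod p] K)) := by
      apply RingHom.ext
      intro y
      exact (Algebra.TensorProduct.comm_tmul (ZMod p) y 1).symm
    rw [he, PrimeSpectrum.comap_comp]
    exact h.comp (PrimeSpectrum.homeomorphOfRingEquiv e).symm.isOpenMap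
  have hcomp : ∀ q : PrimeSpectrum D, (PrimeSpectrum.comap ν (PrimeSpectrum.comap φ q)).asIdeal.comap
      (Ideal.Quotient.mk _) = q.asIdeal.comap u.ofConv.toRingHom := by
    intro q
    rw [← hφx]
    rfl
  refine ⟨Set.range (PrimeSpectrum.comap ν ∘ PrimeSpectrum.comap φ),
    (hopen'.comp hopen).isOpen_range, ?_, ?_⟩
  · intro P hP
    -- specialise `x` to the neutral element
    obtain ⟨h, h1, h2⟩ := hlift K (RingHom.id K)
      (1 : WithConv (A →ₐ[ℤ_[p]] K)).ofConv.toRingHom hK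
    refine ⟨PrimeSpectrum.comap h ⊥, ?_⟩
    apply PrimeSpectrum.ext
    apply Ideal.comap_injective_of_surjective _ Ideal.Quotient.mk_surjective
    rw [hP, Function.comp_apply, hcomp]
    have h3 := congrArg (gmap A (toA hK h)) hu
    rw [map_mul, map_mul] at h3
    have e1 : (toA hK h).comp x = (1 : WithConv (A →ₐ[ℤ_[p]] K)).ofConv := by
      ext y
      exact DFunLike.congr_fun h2 y
    have e2 : gmap A (toA hK h) (toConv (Fr hD x)) = 1 := by
      apply WithConv.ofConv_injective
      change (toA hK h).comp (Fr hD x) = _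
      rw [comp_Fr hD hK, e1]
      exact congrArg WithConv.ofConv (map_one (gmap A (toA hK (frob hK))))
    have e3 : gmap A (toA hK h) (toConv x) = 1 := WithConv.ofConv_injective e1
    have e4 : gmap A (toA hK h) α = toConv a := by
      apply WithConv.ofConv_injective
      ext y
      exact DFunLike.congr_fun h1 (a y)
    rw [e2, e3, e4, one_mul, mul_one] at h3
    ext y
    have := DFunLike.congr_fun (congrArg WithConv.ofConv h3) y
    change h (u.ofConv y) = a y at this
    simp [← this, RingHom.mem_ker]
  · rintro _ ⟨q, rfl⟩
    -- the tautological point of `G_K` with image `q`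
    let L := q.asIdeal.ResidueField
    let r : D →+* L := algebraMap D L
    let _ : Algebra ℤ_[p] L := (r.comp (algebraMap ℤ_[p] D)).toAlgebra
    have hL : (p : L) = 0 := by rw [← map_natCast r, hD, map_zero]
    refine ⟨L, inferInstance, inferInstance, hL, r.comp κ, toConv ((toA hL r).comp x),
      (toA hL r).comp u.ofConv, ?_, ?_⟩
    · have h3 := congrArg (gmap A (toA hL r)) hu
      rw [map_mul, map_mul] at h3
      have e1 : gmap A (toA hL r) (toConv (Fr hD x)) = toConv (Fr hL ((toA hL r).comp x)) := by
        apply WithConv.ofConv_injective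
        exact comp_Fr hD hL _ _
      rw [e1] at h3
      exact h3
    · rw [Function.comp_apply, hcomp]
      ext y
      change u.ofConv y ∈ q.asIdeal ↔ r (u.ofConv y) = 0
      exact (Ideal.algebraMap_residueField_eq_zero).symm

/-- Two field-valued points of `Spec A` with the same image become equal over a common extension. -/
lemma exists_common_field {A L M : Type} [CommRing A] [Field L] [Field M] (f : A →+* L)
    (g : A →+* M) (h : RingHom.ker f = RingHom.ker g) :
    ∃ (N : Type) (_ : Field N) (i : L →+* N) (j : M →+* N), i.comp f = j.comp g := by
  have hP : (RingHom.ker f).IsPrime := RingHom.ker_isPrime f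
  -- `L` and `M` both contain the residue field of the common image; take a residue field of `L ⊗ M`
  let κ := (RingHom.ker f).ResidueField
  let f' : κ →+* L := Ideal.ResidueField.lift _ f le_rfl fun x hx ↦ by
    simpa [Ideal.primeCompl, RingHom.mem_ker, IsUnit.mem_submonoid_iff] using hx
  let g' : κ →+* M := Ideal.ResidueField.lift _ g h.le fun x hx ↦ by
    simpa [Ideal.primeCompl, h, RingHom.mem_ker, IsUnit.mem_submonoid_iff] using hx
  let _ : Algebra κ L := f'.toAlgebra
  let _ : Algebra κ M := g'.toAlgebra
  obtain ⟨m, hm⟩ := Ideal.exists_maximal (L ⊗[κ] M)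
  let _ : Field (L ⊗[κ] M ⧸ m) := Ideal.Quotient.field m
  let mk := Ideal.Quotient.mk m
  refine ⟨L ⊗[κ] M ⧸ m, inferInstance,
    mk.comp (Algebra.TensorProduct.includeLeft : L →ₐ[κ] L ⊗[κ] M).toRingHom,
    mk.comp (Algebra.TensorProduct.includeRight : M →ₐ[κ] L ⊗[κ] M).toRingHom, ?_⟩
  ext y
  have h1 : f y = algebraMap κ L (algebraMap A κ y) := by simp [RingHom.algebraMap_toAlgebra, f', κ]
  have h2 : g y = algebraMap κ M (algebraMap A κ y) := by simp [RingHom.algebraMap_toAlgebra, g', κ]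
  simp [h1, h2]

end CharP

/-! ### Lang's theorem -/

section Lang

variable {p : ℕ} [hp : Fact p.Prime] {A : Type} [CommRing A] [HopfAlgebra ℤ_[p] A]
  {B : Type} [CommRing B] [Algebra ℤ_[p] B] (ρ : B →ₐ[ℤ_[p]] (A ⊗[ℤ_[p]] B))

lemma Fr_act {T : Type} [CommRing T] [Algebra ℤ_[p] T] (h : (p : T) = 0)
    (g : WithConv (A →ₐ[ℤ_[p]] T)) (y : B →ₐ[ℤ_[p]] T) :
    Fr h (act ρ g y) = act ρ (toConv (Fr h g.ofConv)) (Fr h y) :=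
  comp_act ρ (toA h (frob h)) g y

/-- The points `P` of the special fibre of `Spec A` which occur as the difference between a
field-valued point `y` of `Spec B` and its Frobenius twist: `F(y) = a y`, with `a` lying over `P`. -/
def Diff (P : PrimeSpectrum (A ⧸ Ideal.span {(p : A)})) : Prop :=
  ∃ (Ω : Type) (_ : Field Ω) (_ : Algebra ℤ_[p] Ω) (hΩ : (p : Ω) = 0)
    (y : B →ₐ[ℤ_[p]] Ω) (a : WithConv (A →ₐ[ℤ_[p]] Ω)),
    Fr hΩ y = act ρ a y ∧ P.asIdeal.comap (Ideal.Quotient.mk _) = RingHom.ker a.ofConv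

variable {ρ}

/-- Every point of the special fibre has a neighbourhood on which `Diff` is constant: if
`F(x) c = a x`, then `y ↦ x y` turns solutions of `F(y) = c y` into solutions of `F(y) = a y`. -/
lemma exists_open_diff_iff (hA : Algebra.FiniteType ℤ_[p] A)
    (hcoassoc :
      (TensorProduct.assoc ℤ_[p] A A B).toLinearMap ∘ₗ
          (TensorProduct.map (Coalgebra.comul (R := ℤ_[p]) (A := A)) LinearMap.id) ∘ₗ
          ρ.toLinearMap =
        (TensorProduct.map LinearMap.id ρ.toLinearMap) ∘ₗ ρ.toLinearMap)
    (P : PrimeSpectrum (A ⧸ Ideal.span {(p : A)})) :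
    ∃ U : Set (PrimeSpectrum (A ⧸ Ideal.span {(p : A)})), IsOpen U ∧ P ∈ U ∧
      ∀ Q ∈ U, Diff ρ Q ↔ Diff ρ P := by
  let Ab := A ⧸ Ideal.span {(p : A)}
  have hAb : (p : Ab) = 0 := by
    rw [← map_natCast (Ideal.Quotient.mk _), Ideal.Quotient.eq_zero_iff_mem]
    exact Ideal.mem_span_singleton_self _
  have : Nontrivial Ab := ⟨0, 1, fun h ↦ P.2.ne_top ((Ideal.eq_top_iff_one _).mpr (h ▸ P.asIdeal.zero_mem))⟩
  have : CharP Ab p := (CharP.charP_iff_prime_eq_zero hp.out).2 hAb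
  let _ : Algebra (ZMod p) Ab := ZMod.algebra Ab p
  let K := P.asIdeal.ResidueField
  let r : A →+* K := (algebraMap Ab K).comp (Ideal.Quotient.mk _)
  let _ : Algebra ℤ_[p] K := (r.comp (algebraMap ℤ_[p] A)).toAlgebra
  have hK : (p : K) = 0 := by rw [← map_natCast (algebraMap Ab K), hAb, map_zero]
  let a : A →ₐ[ℤ_[p]] K := toA hK r
  have hPa : P.asIdeal.comap (Ideal.Quotient.mk _) = RingHom.ker a := by
    ext z
    change Ideal.Quotient.mk _ z ∈ P.asIdeal ↔ algebraMap Ab K (Ideal.Quotient.mk _ z) = 0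
    exact (Ideal.algebraMap_residueField_eq_zero).symm
  obtain ⟨U, hU, hPU, h⟩ := exists_open_twisted hA hK a
  refine ⟨U, hU, hPU P hPa, fun Q hQ ↦ ?_⟩
  obtain ⟨L, _, _, hL, i, x, c, hxc, hQc⟩ := h Q hQ
  constructor
  · rintro ⟨M, _, _, hM, y, c', hy, hc'⟩
    obtain ⟨N, _, j, j', hjj⟩ := exists_common_field c.toRingHom c'.ofConv.toRingHom
      (hQc.symm.trans hc')
    let _ : Algebra ℤ_[p] N := (j.comp (algebraMap ℤ_[p] L)).toAlgebra
    have hN : (p : N) = 0 := by rw [← map_natCast j, hL, map_zero]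
    have e1 := congrArg (gmap A (toA hN j)) hxc
    rw [map_mul, map_mul] at e1
    have e2 := congrArg (fun z ↦ (toA hN j').comp z) hy
    simp only [comp_Fr hM hN, comp_act] at e2
    have e3 : gmap A (toA hN j') c' = gmap A (toA hN j) (toConv c) := by
      apply WithConv.ofConv_injective
      ext z
      exact (DFunLike.congr_fun hjj z).symm
    have e4 : toConv (Fr hN (gmap A (toA hN j) x).ofConv) =
        gmap A (toA hN j) (toConv (Fr hL x.ofConv)) := by
      apply WithConv.ofConv_injective
      exact (comp_Fr hL hN _ _).symm
    refine ⟨N, inferInstance, inferInstance, hN, act ρ (gmap A (toA hN j) x) ((toA hN j').comp y),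
      gmap A (toA hN j) (toConv ((toA hL i).comp a)), ?_, ?_⟩
    · rw [Fr_act, e2, ← act_mul hcoassoc, ← act_mul hcoassoc, e3, e4, e1]
    · rw [hPa]
      ext z
      exact (map_eq_zero (j.comp i)).symm
  · rintro ⟨M, _, _, hM, y, a', hy, ha'⟩
    obtain ⟨N, _, j, j', hjj⟩ := exists_common_field ((i.comp a.toRingHom)) a'.ofConv.toRingHom (by
      refine Eq.trans ?_ (hPa.symm.trans ha')
      ext z
      exact map_eq_zero i)
    let _ : Algebra ℤ_[p] N := (j.comp (algebraMap ℤ_[p] L)).toAlgebra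
    let _ := pointsGroup (R := ℤ_[p]) (A := A) (T := N)
    have hN : (p : N) = 0 := by rw [← map_natCast j, hL, map_zero]
    have e1 := congrArg (gmap A (toA hN j)) hxc
    rw [map_mul, map_mul] at e1
    have e2 := congrArg (fun z ↦ (toA hN j').comp z) hy
    simp only [comp_Fr hM hN, comp_act] at e2
    have e3 : gmap A (toA hN j') a' = gmap A (toA hN j) (toConv ((toA hL i).comp a)) := by
      apply WithConv.ofConv_injective
      ext z
      exact (DFunLike.congr_fun hjj z).symm
    set X := gmap A (toA hN j) x with hX
    have e4 : gmap A (toA hN j) (toConv (Fr hL x.ofConv)) = gmap A (toA hN (frob hN)) X := by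
      apply WithConv.ofConv_injective
      exact comp_Fr hL hN _ _
    have e5 : toConv (Fr hN (X⁻¹).ofConv) * gmap A (toA hN j) (toConv ((toA hL i).comp a)) =
        gmap A (toA hN j) (toConv c) * X⁻¹ := by
      change gmap A (toA hN (frob hN)) X⁻¹ * _ = _
      rw [e4] at e1
      apply mul_left_cancel (a := gmap A (toA hN (frob hN)) X)
      rw [← mul_assoc, ← map_mul, ← mul_assoc, e1, mul_inv_cancel_right, mul_inv_cancel, map_one,
        one_mul]
    refine ⟨N, inferInstance, inferInstance, hN, act ρ X⁻¹ ((toA hN j').comp y),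
      gmap A (toA hN j) (toConv c), ?_, ?_⟩
    · rw [Fr_act, e2, ← act_mul hcoassoc, ← act_mul hcoassoc, e3, e5]
    · rw [hQc]
      ext z
      exact (map_eq_zero j).symm

/-- **Lang's theorem**: a torsor under a group over `ℤ_p` with connected special fibre has an
`𝔽_p`-valued point. -/
lemma exists_ringHom_zmod (hA : Algebra.FiniteType ℤ_[p] A)
    (hconn : ConnectedSpace (PrimeSpectrum (A ⧸ (Ideal.span {(p : A)}))))
    [Module.FaithfullyFlat ℤ_[p] B]
    (hcoassoc :
      (TensorProduct.assoc ℤ_[p] A A B).toLinearMap ∘ₗ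
          (TensorProduct.map (Coalgebra.comul (R := ℤ_[p]) (A := A)) LinearMap.id) ∘ₗ
          ρ.toLinearMap =
        (TensorProduct.map LinearMap.id ρ.toLinearMap) ∘ₗ ρ.toLinearMap)
    (hcounit :
      (TensorProduct.lid ℤ_[p] B).toLinearMap ∘ₗ
          (TensorProduct.map (Coalgebra.counit (R := ℤ_[p]) (A := A)) LinearMap.id) ∘ₗ
          ρ.toLinearMap =
        LinearMap.id)
    (htorsor : Function.Bijective
      (Algebra.TensorProduct.lift
        (Algebra.TensorProduct.includeRight : B →ₐ[ℤ_[p]] A ⊗[ℤ_[p]] B) ρ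
        (fun _ _ => Commute.all _ _) : B ⊗[ℤ_[p]] B →ₐ[ℤ_[p]] A ⊗[ℤ_[p]] B)) :
    Nonempty (B →+* ZMod p) := by
  choose U hUo hPU hU using exists_open_diff_iff hA hcoassoc
  have hclopen : IsClopen {P | Diff ρ P} := by
    constructor
    · rw [← isOpen_compl_iff, isOpen_iff_forall_mem_open]
      exact fun P hP ↦ ⟨U P, fun Q hQ hQ' ↦ hP ((hU P Q hQ).mp hQ'), hUo P, hPU P⟩
    · rw [isOpen_iff_forall_mem_open]
      exact fun P hP ↦ ⟨U P, fun Q hQ ↦ (hU P Q hQ).mpr hP, hUo P, hPU P⟩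
  have hne : {P | Diff ρ P}.Nonempty := by
    have hBp : (Ideal.span {(p : ℤ_[p])}).map (algebraMap ℤ_[p] B) ≠ ⊤ := by
      rw [← PadicInt.maximalIdeal_eq_span_p]
      intro h
      exact Module.FaithfullyFlat.submodule_ne_top (R := ℤ_[p]) (M := B)
        (m := IsLocalRing.maximalIdeal ℤ_[p]) inferInstance (by
          rw [Ideal.smul_top_eq_map, h]; rfl)
    obtain ⟨m, hm, hmp⟩ := Ideal.exists_le_maximal _ hBp
    let _ : Field (B ⧸ m) := Ideal.Quotient.field m
    have hΩ : (p : B ⧸ m) = 0 := by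
      rw [← map_natCast (Ideal.Quotient.mk m), Ideal.Quotient.eq_zero_iff_mem]
      apply hmp
      rw [Ideal.map_span, Set.image_singleton, map_natCast]
      exact Ideal.mem_span_singleton_self _
    let y : B →ₐ[ℤ_[p]] B ⧸ m := Ideal.Quotient.mkₐ _ m
    obtain ⟨a, ha⟩ := exists_act_eq htorsor y (Fr hΩ y)
    let a0 : A ⧸ Ideal.span {(p : A)} →+* B ⧸ m :=
      Ideal.Quotient.lift _ a.ofConv.toRingHom (fun z hz ↦ by
        obtain ⟨w, rfl⟩ := Ideal.mem_span_singleton'.mp hz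
        simp [hΩ])
    exact ⟨PrimeSpectrum.comap a0 ⊥, B ⧸ m, inferInstance, inferInstance, hΩ, y, a, ha.symm, rfl⟩
  have huniv := hclopen.eq_univ hne
  -- `Diff` at the neutral element of the special fibre, the kernel of the counit modulo `p`
  let ε : A →+* ZMod p := PadicInt.toZMod.comp (Bialgebra.counitAlgHom ℤ_[p] A).toRingHom
  let ε0 : A ⧸ Ideal.span {(p : A)} →+* ZMod p :=
    Ideal.Quotient.lift _ ε (fun z hz ↦ by
      obtain ⟨w, rfl⟩ := Ideal.mem_span_singleton'.mp hz
      rw [map_mul, map_natCast, CharP.cast_eq_zero, mul_zero])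
  obtain ⟨Ω, _, _, hΩ, y, a, hy, ha⟩ : Diff ρ (PrimeSpectrum.comap ε0 ⊥) := by
    have : PrimeSpectrum.comap ε0 ⊥ ∈ {P | Diff ρ P} := huniv ▸ Set.mem_univ _
    exact this
  have ha1 : a = 1 := by
    apply WithConv.ofConv_injective
    ext z
    have h1 : z - algebraMap ℤ_[p] A (Coalgebra.counit z) ∈ RingHom.ker a.ofConv := by
      rw [← ha]
      change ε _ = 0
      have : Bialgebra.counitAlgHom ℤ_[p] A (algebraMap ℤ_[p] A (Coalgebra.counit z)) =
        Bialgebra.counitAlgHom ℤ_[p] A z := by simp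
      change PadicInt.toZMod (Bialgebra.counitAlgHom ℤ_[p] A _) = 0
      rw [map_sub, this, sub_self, map_zero]
    have h2 : a.ofConv z = algebraMap ℤ_[p] Ω (Coalgebra.counit z) := by
      rw [RingHom.mem_ker, map_sub, AlgHom.commutes] at h1
      exact sub_eq_zero.mp h1
    rw [h2]
    simp [AlgHom.convOne_def, Algebra.ofId_apply]
  rw [ha1, act_one hcounit] at hy
  have : CharP Ω p := (CharP.charP_iff_prime_eq_zero hp.out).2 hΩ
  have hmem : ∀ b, y b ∈ (ZMod.castHom (dvd_refl p) Ω).range := by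
    intro b
    have h1 : y b ^ p = y b := DFunLike.congr_fun hy b
    have h2 := (Subfield.mem_bot_iff_pow_eq_self (F := Ω) (p := p)).mpr h1
    rw [← ZMod.fieldRange_castHom_eq_bot p] at h2
    exact h2
  let e := RingHom.rangeRestrict (ZMod.castHom (dvd_refl p) Ω)
  have he : Function.Bijective e :=
    ⟨fun u v huv ↦ (ZMod.castHom (dvd_refl p) Ω).injective (congrArg Subtype.val huv),
      RingHom.rangeRestrict_surjective _⟩
  exact ⟨((RingEquiv.ofBijective e he).symm.toRingHom).comp (y.toRingHom.codRestrict _ hmem)⟩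

end Lang

/-! ### Smoothness and lifting -/

section Smooth

/-- The torsor isomorphism `B ⊗ B ≅ A ⊗ B` makes `B` smooth after the faithfully flat base change
to `B` itself. -/
lemma smooth_of_torsor {R A B : Type} [CommRing R] [CommRing A] [Algebra R A] [CommRing B]
    [Algebra R B] [Module.FaithfullyFlat R B] [Algebra.Smooth R A] (ρ : B →ₐ[R] A ⊗[R] B)
    (htorsor : Function.Bijective
      (Algebra.TensorProduct.lift
        (Algebra.TensorProduct.includeRight : B →ₐ[R] A ⊗[R] B) ρ
        (fun _ _ => Commute.all _ _) : B ⊗[R] B →ₐ[R] A ⊗[R] B)) : Algebra.Smooth R B := by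
  let e : B ⊗[R] B ≃ₐ[R] B ⊗[R] A :=
    (AlgEquiv.ofBijective _ htorsor).trans (Algebra.TensorProduct.comm R A B)
  let e' : B ⊗[R] A ≃ₐ[B] B ⊗[R] B := (AlgEquiv.ofRingEquiv (f := e.toRingEquiv) fun b ↦ by
    simp [e]).symm
  have : Algebra.Smooth B (B ⊗[R] B) := Algebra.Smooth.of_equiv e'
  exact Algebra.Smooth.of_smooth_tensorProduct_of_faithfullyFlat (T := B)

end Smooth

/-- Hensel's lemma for a smooth `ℤ_p`-algebra, with an `𝔽_p`-point as input. -/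
lemma exists_algHom_of_smooth {p : ℕ} [hp : Fact p.Prime] {B : Type} [CommRing B]
    [Algebra ℤ_[p] B] [Algebra.Smooth ℤ_[p] B] (f : B →+* ZMod p) : Nonempty (B →ₐ[ℤ_[p]] ℤ_[p]) := by
  let m := IsLocalRing.maximalIdeal ℤ_[p]
  have hm : (p : ℤ_[p] ⧸ m) = 0 := by
    rw [← map_natCast (Ideal.Quotient.mk m), Ideal.Quotient.eq_zero_iff_mem]
    simp [m, PadicInt.maximalIdeal_eq_span_p]
  have : CharP (ℤ_[p] ⧸ m) p := (CharP.charP_iff_prime_eq_zero hp.out).2 hm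
  obtain ⟨g, -⟩ := Algebra.FormallySmooth.exists_mkₐ_comp_eq_of_isAdicComplete (I := m)
    (toA hm ((ZMod.castHom (dvd_refl p) (ℤ_[p] ⧸ m)).comp f))
  exact ⟨g⟩

end TorsorLang

/-- Let `Y = Spec B` be an affine scheme of finite type over `Spec ℤ_p` which is a torsor (in
the flat topology) of a smooth affine group scheme `G = Spec A` over `ℤ_p` with connected
special fibre `G_{𝔽_p}`.  (The torsor structure is encoded by a coassociative counital
coaction `ρ : B → A ⊗ B` for the Hopf algebra `A`, such that `b ⊗ b' ↦ (1 ⊗ b)·ρ(b')` is an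
isomorphism `B ⊗ B ≅ A ⊗ B`, together with faithful flatness of `B` over the local ring
`ℤ_p`.)  If `Y(W(k))` is nonempty for `k` algebraically closed of characteristic `p`, then
`Y(ℤ_p)` is nonempty. -/
theorem torsor_has_padic_point_of_witt_point
    (p : ℕ) [Fact p.Prime]
    (A : Type) [CommRing A] [HopfAlgebra ℤ_[p] A]
    [Algebra.FormallySmooth ℤ_[p] A] (hA : Algebra.FinitePresentation ℤ_[p] A)
    (hconn : ConnectedSpace (PrimeSpectrum (A ⧸ (Ideal.span {(p : A)}))))
    (B : Type) [CommRing B] [Algebra ℤ_[p] B] (hB : Algebra.FiniteType ℤ_[p] B)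
    [Module.FaithfullyFlat ℤ_[p] B]
    (ρ : B →ₐ[ℤ_[p]] (A ⊗[ℤ_[p]] B))
    (hcoassoc :
      (TensorProduct.assoc ℤ_[p] A A B).toLinearMap ∘ₗ
          (TensorProduct.map (Coalgebra.comul (R := ℤ_[p]) (A := A)) LinearMap.id) ∘ₗ
          ρ.toLinearMap =
        (TensorProduct.map LinearMap.id ρ.toLinearMap) ∘ₗ ρ.toLinearMap)
    (hcounit :
      (TensorProduct.lid ℤ_[p] B).toLinearMap ∘ₗ
          (TensorProduct.map (Coalgebra.counit (R := ℤ_[p]) (A := A)) LinearMap.id) ∘ₗ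
          ρ.toLinearMap =
        LinearMap.id)
    (htorsor : Function.Bijective
      (Algebra.TensorProduct.lift
        (Algebra.TensorProduct.includeRight : B →ₐ[ℤ_[p]] A ⊗[ℤ_[p]] B) ρ
        (fun _ _ => Commute.all _ _) : B ⊗[ℤ_[p]] B →ₐ[ℤ_[p]] A ⊗[ℤ_[p]] B))
    (k : Type*) [Field k] [IsAlgClosed k] [CharP k p] :
    letI : Algebra ℤ_[p] (WittVector p k) := (padicToWitt p k).toAlgebra
    Nonempty (B →ₐ[ℤ_[p]] WittVector p k) → Nonempty (B →ₐ[ℤ_[p]] ℤ_[p]) := by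
  rintro -
  have : Algebra.Smooth ℤ_[p] A := ⟨inferInstance, hA⟩
  have : Algebra.Smooth ℤ_[p] B := TorsorLang.smooth_of_torsor ρ htorsor
  have hAft : Algebra.FiniteType ℤ_[p] A := inferInstance
  obtain ⟨f⟩ := TorsorLang.exists_ringHom_zmod hAft hconn hcoassoc hcounit htorsor
  exact TorsorLang.exists_algHom_of_smooth f
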